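/- Let Z be a real random variable on a probability space (Ω, F, P) with Z > 0 almost surely, and suppose that E[Z^p] = ∞ for some p > 0. Then for every δ > 0 there exists a sequence (y_n) of positive real numbers increasing to +∞ such that lim_{n→∞} y_n^p (ln y_n)^{1+δ} P(Z ≥ y_n) = +∞; in particular, for every C > 0 there exists n₀ such that for all n ≥ n₀, P(Z ≥ y_n) ≥ C / (y_n^p (ln y_n)^{1+δ}). -/

import Mathlib

open MeasureTheory Filter Set

/-- If `Z > 0` a.s. and `E[Z^p] = ∞` for some `p > 0`, then for every
`δ > 0` there exists a sequence `(y_n)` of positive reals increasing to `+∞` such that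
`y_n^p (ln y_n)^{1+δ} P(Z ≥ y_n) → ∞`; in particular, for every `C > 0` there is `n₀`
with `P(Z ≥ y_n) ≥ C / (y_n^p (ln y_n)^{1+δ})` for all `n ≥ n₀`. -/
theorem stmt2 {Ω : Type*} [MeasurableSpace Ω] (P : Measure Ω) [IsProbabilityMeasure P]
    (Z : Ω → ℝ) (hZmeas : Measurable Z) (hZpos : ∀ᵐ ω ∂P, 0 < Z ω)
    (p : ℝ) (hp : 0 < p)
    (hZp : ∫⁻ ω, ENNReal.ofReal (Z ω ^ p) ∂P = ⊤) :
    ∀ δ > (0 : ℝ), ∃ y : ℕ → ℝ,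
      (∀ n, 0 < y n) ∧ Monotone y ∧ Tendsto y atTop atTop ∧
      Tendsto (fun n => y n ^ p * Real.log (y n) ^ (1 + δ) *
        (P {ω | y n ≤ Z ω}).toReal) atTop atTop ∧
      (∀ C > (0 : ℝ), ∃ n₀ : ℕ, ∀ n ≥ n₀,
        (P {ω | y n ≤ Z ω}).toReal ≥ C / (y n ^ p * Real.log (y n) ^ (1 + δ))) := by
  intro δ hδ
  set q : ℕ → ℝ := fun k => (P {ω | Real.exp k ≤ Z ω}).toReal with hq
  have hfreq : ∀ n : ℕ, ∃ᶠ k : ℕ in atTop,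
      (n : ℝ) ≤ Real.exp k ^ p * Real.log (Real.exp k) ^ (1 + δ) * q k := by
    intro n hcon
    have hsum : Summable (fun k : ℕ => Real.exp ((k + 1) * p) * q k) := by
      have hs : Summable (fun k : ℕ => (Real.exp p * n) * (1 / (k : ℝ) ^ (1 + δ))) :=
        (Real.summable_one_div_nat_rpow.mpr (by linarith)).mul_left _
      refine Summable.of_norm_bounded_eventually_nat hs ?_
      filter_upwards [hcon, eventually_ge_atTop 1] with k hk hk1
      have hk0 : (0 : ℝ) < k := by exact_mod_cast hk1
      have hkp : (0 : ℝ) < (k : ℝ) ^ (1 + δ) := Real.rpow_pos_of_pos hk0 _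
      have hq0 : 0 ≤ q k := ENNReal.toReal_nonneg
      rw [Real.log_exp, ← Real.exp_mul] at hk
      have hk' := (not_le.mp hk).le
      rw [Real.norm_of_nonneg (by positivity), mul_one_div, le_div_iff₀ hkp]
      have he : Real.exp (((k : ℝ) + 1) * p) = Real.exp p * Real.exp (k * p) := by
        rw [← Real.exp_add]; congr 1; ring
      rw [he]
      calc _ = Real.exp p * (Real.exp (k * p) * (k : ℝ) ^ (1 + δ) * q k) := by ring
        _ ≤ _ := by gcongr
    have hmeas : ∀ k : ℕ, MeasurableSet {ω | Real.exp k ≤ Z ω} := fun k =>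
      measurableSet_le measurable_const hZmeas
    have hpt : ∀ᵐ ω ∂P, ENNReal.ofReal (Z ω ^ p) ≤ 1 + ∑' k : ℕ,
        indicator {ω | Real.exp k ≤ Z ω}
          (fun _ => ENNReal.ofReal (Real.exp (((k : ℝ) + 1) * p))) ω := by
      filter_upwards [hZpos] with ω hω
      rcases le_total (Z ω) 1 with h1 | h1
      · refine le_trans ?_ le_self_add
        rw [← ENNReal.ofReal_one]
        exact ENNReal.ofReal_le_ofReal (Real.rpow_le_one hω.le h1 hp.le)
      · refine le_trans ?_ le_add_self
        have hl : 0 ≤ Real.log (Z ω) := Real.log_nonneg h1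
        refine le_trans ?_ (ENNReal.le_tsum ⌊Real.log (Z ω)⌋₊)
        have hm : ω ∈ {ω | Real.exp (⌊Real.log (Z ω)⌋₊ : ℝ) ≤ Z ω} := by
          rw [mem_setOf_eq, ← Real.le_log_iff_exp_le hω]
          exact Nat.floor_le hl
        have hm' : ω ∈ {ω' | Real.exp (⌊Real.log (Z ω)⌋₊ : ℝ) ≤ Z ω'} := hm
        rw [indicator_of_mem hm']
        apply ENNReal.ofReal_le_ofReal
        rw [Real.rpow_def_of_pos hω]
        gcongr
        exact (Nat.lt_floor_add_one _).le
    have hlt := lintegral_mono_ae hpt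
    rw [hZp, lintegral_add_left measurable_const, lintegral_tsum
      (fun k => (measurable_const.indicator (hmeas k)).aemeasurable)] at hlt
    simp only [lintegral_const, measure_univ, mul_one] at hlt
    have he : ∀ k : ℕ, ∫⁻ ω, indicator {ω | Real.exp k ≤ Z ω}
          (fun _ => ENNReal.ofReal (Real.exp (((k : ℝ) + 1) * p))) ω ∂P
        = ENNReal.ofReal (Real.exp ((k + 1) * p) * q k) := by
      intro k
      rw [lintegral_indicator_const (hmeas k), ENNReal.ofReal_mul (Real.exp_pos _).le, hq,
        ENNReal.ofReal_toReal (measure_ne_top _ _)]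
    simp_rw [he] at hlt
    rw [top_le_iff] at hlt
    exact ENNReal.add_ne_top.mpr ⟨ENNReal.one_ne_top, hsum.tsum_ofReal_ne_top⟩ hlt
  obtain ⟨φ, hφ, hge⟩ := extraction_forall_of_frequently hfreq
  have hT : Tendsto (fun n => Real.exp (φ n) ^ p * Real.log (Real.exp (φ n)) ^ (1 + δ) *
        (P {ω | Real.exp (φ n) ≤ Z ω}).toReal) atTop atTop :=
    tendsto_atTop_mono hge tendsto_natCast_atTop_atTop
  refine ⟨fun n => Real.exp (φ n), fun n => Real.exp_pos _, ?_, ?_, hT, ?_⟩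
  · intro a b hab
    exact Real.exp_le_exp.mpr (by exact_mod_cast hφ.monotone hab)
  · exact Real.tendsto_exp_atTop.comp (tendsto_natCast_atTop_atTop.comp hφ.tendsto_atTop)
  · intro C hC
    obtain ⟨n₀, hn₀⟩ := eventually_atTop.mp
      ((hT.eventually_ge_atTop C).and (eventually_ge_atTop 1))
    refine ⟨n₀, fun n hn => ?_⟩
    obtain ⟨h1, h2⟩ := hn₀ n hn
    have h3 : (0 : ℝ) < φ n := by exact_mod_cast lt_of_lt_of_le h2 (hφ.id_le n)
    have h4 : 0 < Real.exp (φ n) ^ p * Real.log (Real.exp (φ n)) ^ (1 + δ) := by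
      rw [Real.log_exp]; positivity
    rw [ge_iff_le, div_le_iff₀ h4, mul_comm]
    exact h1
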